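/- arXiv:1408.5214 — 3 statements merged into one kernel-verified Lean document; each statement's English description precedes it below -/
import Mathlib

section
/- Let τ > 0 and let I = [c, d] ⊆ ℝ with c < 0 < d. Then for every q ∈ ℝ, the point p = [τ·shrink(τ⁻¹q)]_I⁺ satisfies p ∈ I and τ·|p| + ½(p − q)² ≤ τ·|t| + ½(t − q)² for all t ∈ I; that is, p is the unique minimizer over I of t ↦ τ|t| + ½(t − q)². -/
/-!
With `w = τ * shrink (τ⁻¹ * q)`, the residual `v = q - w` is a subgradient of `τ|·|` at `w`
(`shrink_cases`). Since `0` lies in the interval, the projection `p` of `w` lies between `0` and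
`w`, so `v` remains a subgradient of `τ|·|` at `p`. Adding the variational inequality
`(w - p) * (t - p) ≤ 0` of the projection (`IsProjR.mul_nonpos`) gives the quadratic growth bound
`F p + ½ (t - p)² ≤ F t` for the objective `F` and every `t` of the interval
(`IsProjR.quadratic_growth`), from which minimality and uniqueness both follow.
-/

noncomputable section

/-- The shrinkage operator `shrink(s) = sign(s) * max (|s| - 1) 0`. -/
def shrink (s : ℝ) : ℝ := Real.sign s * max (|s| - 1) 0

/-- `IsProjR I w p` : `p` is the projection of `w` onto `I ⊆ ℝ`. -/
def IsProjR (I : Set ℝ) (w p : ℝ) : Prop := p ∈ I ∧ ∀ t ∈ I, |p - w| ≤ |t - w|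

/-- The residual `q - w` of `w = τ * shrink (τ⁻¹ * q)` is a subgradient of `τ|·|` at `w`,
written out by the sign of `w`. -/
lemma shrink_cases (τ : ℝ) (hτ : 0 < τ) (q : ℝ) :
    (0 < τ * shrink (τ⁻¹ * q) ∧ q - τ * shrink (τ⁻¹ * q) = τ) ∨
    (τ * shrink (τ⁻¹ * q) = 0 ∧ |q| ≤ τ) ∨
    (τ * shrink (τ⁻¹ * q) < 0 ∧ q - τ * shrink (τ⁻¹ * q) = -τ) := by
  obtain ⟨s, rfl⟩ : ∃ s, q = τ * s := ⟨τ⁻¹ * q, by field_simp⟩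
  rw [inv_mul_cancel_left₀ hτ.ne']
  unfold shrink
  rcases le_or_gt |s| 1 with h | h
  · right; left
    rw [max_eq_right (by linarith), abs_mul, abs_of_pos hτ]
    exact ⟨by ring, by nlinarith⟩
  · rw [max_eq_left (by linarith)]
    rcases lt_abs.1 h with h1 | h1
    · left
      rw [Real.sign_of_pos (by linarith), abs_of_pos (by linarith)]
      exact ⟨by nlinarith, by ring⟩
    · right; right
      rw [Real.sign_of_neg (by linarith), abs_of_neg (by linarith)]
      exact ⟨by nlinarith, by ring⟩

/-- Variational inequality characterizing the projection onto an interval. -/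
lemma IsProjR.mul_nonpos {c d w p : ℝ} (hp : IsProjR (Set.Icc c d) w p)
    {t : ℝ} (ht : t ∈ Set.Icc c d) : (w - p) * (t - p) ≤ 0 := by
  obtain ⟨⟨hcp, hpd⟩, hmin⟩ := hp
  obtain ⟨hct, htd⟩ := ht
  -- If `t` and `w` were strictly on the same side of `p`, then whichever of them is closer
  -- to `p` would be a point of the interval closer to `w` than `p` is.
  by_contra! h
  rcases pos_and_pos_or_neg_and_neg_of_mul_pos h with ⟨h1, h2⟩ | ⟨h1, h2⟩
  · have hr : p < min t w := lt_min (by linarith) (by linarith)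
    have := hmin (min t w) ⟨by linarith, (min_le_left _ _).trans htd⟩
    rw [abs_of_neg (by linarith), abs_of_nonpos (by linarith [min_le_right t w])] at this
    linarith
  · have hr : max t w < p := max_lt (by linarith) (by linarith)
    have := hmin (max t w) ⟨hct.trans (le_max_left _ _), by linarith⟩
    rw [abs_of_pos (by linarith), abs_of_nonneg (by linarith [le_max_right t w])] at this
    linarith

/-- Quadratic growth of the objective around the projected shrinkage point: the strengthened
form of minimality that strong convexity of `½ (t - q)²` provides. -/
lemma IsProjR.quadratic_growth {τ c d q p : ℝ} (hτ : 0 < τ) (hc : c < 0) (hd : 0 < d)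
    (hp : IsProjR (Set.Icc c d) (τ * shrink (τ⁻¹ * q)) p) {t : ℝ} (ht : t ∈ Set.Icc c d) :
    τ * |p| + (1 / 2) * (p - q) ^ 2 + (1 / 2) * (t - p) ^ 2
      ≤ τ * |t| + (1 / 2) * (t - q) ^ 2 := by
  have hcases := shrink_cases τ hτ q
  have ht' := hp.mul_nonpos ht
  have h0 := hp.mul_nonpos (t := 0) ⟨hc.le, hd.le⟩
  generalize τ * shrink (τ⁻¹ * q) = w at *
  have hv : |q - w| ≤ τ := by
    rcases hcases with ⟨_, h⟩ | ⟨h, h'⟩ | ⟨_, h⟩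
    · rw [h, abs_of_pos hτ]
    · rwa [h, sub_zero]
    · rw [h, abs_neg, abs_of_pos hτ]
  -- `h0` places `p` between `0` and `w`, which transfers the subgradient from `w` to `p`.
  have hvp : τ * |p| = (q - w) * p := by
    rcases hcases with ⟨hw, h⟩ | ⟨hw, _⟩ | ⟨hw, h⟩
    · have : 0 ≤ p := by by_contra! hn; nlinarith
      rw [h, abs_of_nonneg this]
    · have : p = 0 := by subst hw; nlinarith
      simp [this]
    · have : p ≤ 0 := by by_contra! hn; nlinarith
      rw [h, abs_of_nonpos this]; ring
  have hvt : (q - w) * t ≤ τ * |t| :=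
    (le_abs_self _).trans (by rw [abs_mul]; gcongr)
  linarith

/-- for `τ > 0` and `I = [c, d]` with `c < 0 < d`, the point
`p = [τ·shrink(τ⁻¹q)]_I⁺` is the unique minimizer over `I` of
`t ↦ τ|t| + ½(t − q)²`. -/
theorem proj_shrink_prox_T2 (τ : ℝ) (hτ : 0 < τ) (c d : ℝ) (hc : c < 0) (hd : 0 < d)
    (q p : ℝ) (hp : IsProjR (Set.Icc c d) (τ * shrink (τ⁻¹ * q)) p) :
    p ∈ Set.Icc c d ∧
      (∀ t ∈ Set.Icc c d,
        τ * |p| + (1 / 2) * (p - q) ^ 2 ≤ τ * |t| + (1 / 2) * (t - q) ^ 2) ∧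
      (∀ t ∈ Set.Icc c d,
        (∀ r ∈ Set.Icc c d,
          τ * |t| + (1 / 2) * (t - q) ^ 2 ≤ τ * |r| + (1 / 2) * (r - q) ^ 2) → t = p) := by
  refine ⟨hp.1, fun t ht => ?_, fun t ht hmin => ?_⟩
  · linarith [hp.quadratic_growth hτ hc hd ht, sq_nonneg (t - p)]
  · have h := hp.quadratic_growth hτ hc hd ht
    have h2 := hmin p hp.1
    have h3 : (t - p) ^ 2 = 0 := le_antisymm (by linarith) (sq_nonneg _)
    exact sub_eq_zero.1 (pow_eq_zero_iff two_ne_zero |>.1 h3)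
end
end

section
/- Let A be a real m×n matrix, b ∈ ℝᵐ, u ∈ ℝⁿ, τ > 0, and let X = I₁ × ⋯ × Iₙ ⊆ ℝⁿ be a box with each Iᵢ ∈ T₁ ∪ T₂. For any y ∈ ℝᵐ, the function x ↦ ‖x‖₁ + (1/(2τ))‖x − u‖₂² + ⟨y, b − Ax⟩ attains a unique minimum over X, namely at the point s(y) defined componentwise by s(y)ᵢ = [τ·shrink(τ⁻¹uᵢ + (Aᵀy)ᵢ)]_{Iᵢ}⁺. -/
/-!
The Lagrangian separates over the coordinates: up to the constant `⟪y, b⟫`, it is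
`∑ i, (|x i| + (x i - u i)² / (2τ) - v i * x i)` with `v = Aᵀ y` (`lagrangian_eq_sum`).

In one variable, the unconstrained minimizer is `w = τ * shrink (u / τ + v)`, because
`g = u / τ + v - shrink (u / τ + v)` is a subgradient of `|·|` at `w` (`shrink_cases`). Let `p` be
the projection of `w` onto an interval `I`. For `t ∈ I`, the point `p` lies between `w` and `t`, and
as subgradients of a convex function are monotone, moving from `p` to `t` increases the objective
by at least `(t - p)² / (2τ)` (`scalar_growth`). Summing over the coordinates, the Lagrangian at
`x ∈ X` exceeds its value at `S y` by at least `‖x - S y‖² / (2τ)`, which gives both minimality and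
uniqueness. Of the classes `T₁`, `T₂` only the fact that their members are intervals matters.
-/

noncomputable section

open scoped RealInnerProductSpace

/-- Membership in the class `T₁` of intervals. -/
def InT1 (I : Set ℝ) : Prop :=
  (∃ c : ℝ, 0 < c ∧ I = Set.Ici c) ∨
  (∃ c : ℝ, c < 0 ∧ I = Set.Iic c) ∨
  (∃ c d : ℝ, 0 < c ∧ c < d ∧ I = Set.Icc c d) ∨
  (∃ c d : ℝ, d < c ∧ c < 0 ∧ I = Set.Icc d c)

/-- Membership in the class `T₂` of intervals. -/
def InT2 (I : Set ℝ) : Prop := ∃ c d : ℝ, c < 0 ∧ 0 < d ∧ I = Set.Icc c d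

/-- The ℓ²→ℓ² operator norm of a matrix. -/
def opNorm {m n : ℕ} (A : Matrix (Fin m) (Fin n) ℝ) : ℝ :=
  ‖LinearMap.toContinuousLinearMap (Matrix.toEuclideanLin A)‖

lemma ordConnected_of_InT {I : Set ℝ} (h : InT1 I ∨ InT2 I) : I.OrdConnected := by
  rcases h with (⟨c, -, rfl⟩ | ⟨c, -, rfl⟩ | ⟨c, d, -, -, rfl⟩ | ⟨c, d, -, -, rfl⟩) |
    ⟨c, d, -, -, rfl⟩
  · exact Set.ordConnected_Ici
  · exact Set.ordConnected_Iic
  · exact Set.ordConnected_Icc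
  · exact Set.ordConnected_Icc
  · exact Set.ordConnected_Icc

/-- The projection `p` of `w` onto an interval separates `w` from every point of the interval. -/
lemma IsProjR.between {I : Set ℝ} (hI : I.OrdConnected) {w p t : ℝ} (hp : IsProjR I w p)
    (ht : t ∈ I) : p = w ∨ (w < p ∧ p ≤ t) ∨ (p < w ∧ t ≤ p) := by
  obtain ⟨hpI, hmin⟩ := hp
  rcases lt_trichotomy w p with h | h | h
  · refine Or.inr (Or.inl ⟨h, ?_⟩)
    by_contra! htp
    -- otherwise `max t w` is a point of `I` closer to `w` than `p`
    have hm : max t w ∈ I := hI.out ht hpI ⟨le_max_left _ _, max_le htp.le h.le⟩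
    have h1 := hmin _ hm
    rw [abs_of_pos (sub_pos.2 h), abs_of_nonneg (sub_nonneg.2 (le_max_right _ _))] at h1
    have h2 : max t w < p := max_lt htp h
    linarith
  · exact Or.inl h.symm
  · refine Or.inr (Or.inr ⟨h, ?_⟩)
    by_contra! htp
    have hm : min t w ∈ I := hI.out hpI ht ⟨le_min htp.le h.le, min_le_left _ _⟩
    have h1 := hmin _ hm
    rw [abs_of_neg (sub_neg.2 h), abs_of_nonpos (sub_nonpos.2 (min_le_right _ _))] at h1
    have h2 : p < min t w := lt_min htp h
    linarith

/-- The residual `s - shrink s` is a subgradient of `|·|` at `shrink s`. -/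
lemma shrink_cases_s11 (s : ℝ) :
    (0 < shrink s ∧ s - shrink s = 1) ∨ (shrink s < 0 ∧ s - shrink s = -1) ∨
      (shrink s = 0 ∧ |s| ≤ 1) := by
  unfold shrink
  rcases le_or_gt |s| 1 with h | h
  · right; right
    rw [max_eq_right (by linarith)]
    exact ⟨by simp, h⟩
  · rw [max_eq_left (by linarith)]
    rcases lt_abs.1 h with h' | h'
    · left
      rw [Real.sign_of_pos (by linarith), abs_of_pos (by linarith)]
      constructor <;> linarith
    · right; left
      rw [Real.sign_of_neg (by linarith), abs_of_neg (by linarith)]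
      constructor <;> linarith

/-- Quadratic growth of the one-variable objective on an interval away from the projected shrinkage
point. -/
lemma scalar_growth {I : Set ℝ} (hI : I.OrdConnected) {τ u v p t : ℝ} (hτ : 0 < τ)
    (hp : IsProjR I (τ * shrink (τ⁻¹ * u + v)) p) (ht : t ∈ I) :
    |p| + 1 / (2 * τ) * (p - u) ^ 2 - v * p + 1 / (2 * τ) * (t - p) ^ 2 ≤
      |t| + 1 / (2 * τ) * (t - u) ^ 2 - v * t := by
  have hb := hp.between hI ht
  have hs := shrink_cases_s11 (τ⁻¹ * u + v)
  set s := τ⁻¹ * u + v with hsdef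
  set r := shrink s
  -- the subgradient `s - r` at `w = τ * r` bounds the slope of `|·|` from `p` to `t`
  have hsub : (s - r) * (t - p) ≤ |t| - |p| := by
    rcases hs with ⟨h, e⟩ | ⟨h, e⟩ | ⟨h, e⟩
    · have hw := mul_pos hτ h
      rw [e]
      rcases hb with hb | ⟨h1, h2⟩ | ⟨h1, h2⟩
      · rw [abs_of_pos (hb ▸ hw : 0 < p)]; linarith [le_abs_self t]
      · rw [abs_of_pos (hw.trans h1)]; linarith [le_abs_self t]
      · linarith [abs_sub_abs_le_abs_sub p t, abs_of_nonneg (sub_nonneg.2 h2)]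
    · have hw := mul_neg_of_pos_of_neg hτ h
      rw [e]
      rcases hb with hb | ⟨h1, h2⟩ | ⟨h1, h2⟩
      · rw [abs_of_neg (hb ▸ hw : p < 0)]; linarith [neg_abs_le t]
      · linarith [abs_sub_abs_le_abs_sub p t, abs_of_nonpos (sub_nonpos.2 h2)]
      · rw [abs_of_neg (h1.trans hw)]; linarith [neg_abs_le t]
    · obtain ⟨e1, e2⟩ := abs_le.1 e
      rw [h, mul_zero] at hb
      rw [h, sub_zero]
      rcases hb with hb | ⟨h1, h2⟩ | ⟨h1, h2⟩
      · rw [hb, abs_zero, sub_zero, sub_zero]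
        calc s * t ≤ |s * t| := le_abs_self _
          _ = |s| * |t| := abs_mul _ _
          _ ≤ |t| := mul_le_of_le_one_left (abs_nonneg t) e
      · rw [abs_of_pos h1, abs_of_pos (h1.trans_le h2)]
        nlinarith
      · rw [abs_of_neg h1, abs_of_neg (h2.trans_lt h1)]
        nlinarith
  have hvar : 0 ≤ (t - p) * (p - τ * r) / τ := by
    refine div_nonneg ?_ hτ.le
    rcases hb with hb | ⟨h1, h2⟩ | ⟨h1, h2⟩
    · rw [hb]; simp
    · exact mul_nonneg (by linarith) (by linarith)
    · exact mul_nonneg_of_nonpos_of_nonpos (by linarith) (by linarith)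
  have key : |t| + 1 / (2 * τ) * (t - u) ^ 2 - v * t -
      (|p| + 1 / (2 * τ) * (p - u) ^ 2 - v * p + 1 / (2 * τ) * (t - p) ^ 2) =
      (|t| - |p| - (s - r) * (t - p)) + (t - p) * (p - τ * r) / τ := by
    rw [hsdef]
    field_simp
    ring
  linarith

/-- The Lagrangian as a sum of one-variable objectives. -/
lemma lagrangian_eq_sum {m n : ℕ} (A : Matrix (Fin m) (Fin n) ℝ)
    (b y : EuclideanSpace ℝ (Fin m)) (u x : EuclideanSpace ℝ (Fin n)) (τ : ℝ) :
    (∑ i, |x i|) + (1 / (2 * τ)) * ‖x - u‖ ^ 2 + ⟪y, b - Matrix.toEuclideanLin A x⟫ =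
      (∑ i, (|x i| + 1 / (2 * τ) * (x i - u i) ^ 2 -
        Matrix.toEuclideanLin A.transpose y i * x i)) + ⟪y, b⟫ := by
  have hadj : ⟪y, Matrix.toEuclideanLin A x⟫ =
      ∑ i, Matrix.toEuclideanLin A.transpose y i * x i := by
    have h1 : ⟪y, Matrix.toEuclideanLin A x⟫ = ⟪Matrix.toEuclideanLin A.transpose y, x⟫ := by
      rw [← Matrix.conjTranspose_eq_transpose_of_trivial,
        Matrix.toEuclideanLin_conjTranspose_eq_adjoint, LinearMap.adjoint_inner_left]
    rw [h1, PiLp.inner_apply]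
    exact Finset.sum_congr rfl fun i _ => by simp [mul_comm]
  have hnorm : ‖x - u‖ ^ 2 = ∑ i, (x i - u i) ^ 2 := by
    rw [EuclideanSpace.real_norm_sq_eq]
    rfl
  rw [inner_sub_right, hadj, hnorm, Finset.sum_sub_distrib, Finset.sum_add_distrib,
    Finset.mul_sum]
  ring

/-- for any dual vector `y`, the Lagrangian
`x ↦ ‖x‖₁ + (1/(2τ))‖x − u‖² + ⟨y, b − Ax⟩` attains a unique minimum over the box
`X`, namely at the projected shrinkage point `s(y)`. -/
theorem lagrangian_unique_min {m n : ℕ} (A : Matrix (Fin m) (Fin n) ℝ)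
    (b : EuclideanSpace ℝ (Fin m)) (u : EuclideanSpace ℝ (Fin n))
    (τ : ℝ) (hτ : 0 < τ)
    (I : Fin n → Set ℝ) (hI : ∀ i, InT1 (I i) ∨ InT2 (I i))
    (X : Set (EuclideanSpace ℝ (Fin n))) (hX : X = {x | ∀ i, x i ∈ I i})
    (S : EuclideanSpace ℝ (Fin m) → EuclideanSpace ℝ (Fin n))
    (hS : ∀ y i, IsProjR (I i)
      (τ * shrink (τ⁻¹ * u i + Matrix.toEuclideanLin A.transpose y i)) (S y i))
    (y : EuclideanSpace ℝ (Fin m)) :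
    S y ∈ X ∧
      (∀ x ∈ X,
        (∑ i, |S y i|) + (1 / (2 * τ)) * ‖S y - u‖ ^ 2 +
            ⟪y, b - Matrix.toEuclideanLin A (S y)⟫ ≤
          (∑ i, |x i|) + (1 / (2 * τ)) * ‖x - u‖ ^ 2 +
            ⟪y, b - Matrix.toEuclideanLin A x⟫) ∧
      (∀ x ∈ X,
        (∀ z ∈ X,
          (∑ i, |x i|) + (1 / (2 * τ)) * ‖x - u‖ ^ 2 +
              ⟪y, b - Matrix.toEuclideanLin A x⟫ ≤
            (∑ i, |z i|) + (1 / (2 * τ)) * ‖z - u‖ ^ 2 +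
              ⟪y, b - Matrix.toEuclideanLin A z⟫) → x = S y) := by
  subst hX
  have growth : ∀ x : EuclideanSpace ℝ (Fin n), (∀ i, x i ∈ I i) →
      (∑ i, |S y i|) + (1 / (2 * τ)) * ‖S y - u‖ ^ 2 +
          ⟪y, b - Matrix.toEuclideanLin A (S y)⟫ + 1 / (2 * τ) * ‖x - S y‖ ^ 2 ≤
        (∑ i, |x i|) + (1 / (2 * τ)) * ‖x - u‖ ^ 2 +
          ⟪y, b - Matrix.toEuclideanLin A x⟫ := by
    intro x hx
    have hsum := Finset.sum_le_sum fun i (_ : i ∈ Finset.univ) =>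
      scalar_growth (ordConnected_of_InT (hI i)) hτ (hS y i) (hx i)
    have hnorm : ‖x - S y‖ ^ 2 = ∑ i, (x i - S y i) ^ 2 := by
      rw [EuclideanSpace.real_norm_sq_eq]
      rfl
    rw [Finset.sum_add_distrib, ← Finset.mul_sum, ← hnorm] at hsum
    rw [lagrangian_eq_sum, lagrangian_eq_sum]
    linarith
  have hc : 0 < 1 / (2 * τ) := by positivity
  have hSX : ∀ i, S y i ∈ I i := fun i => (hS y i).1
  refine ⟨hSX, fun x hx => ?_, fun x hx hmin => ?_⟩
  · have h1 : 0 ≤ 1 / (2 * τ) * ‖x - S y‖ ^ 2 := by positivity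
    linarith [growth x hx]
  · have h1 : 1 / (2 * τ) * ‖x - S y‖ ^ 2 ≤ 0 := by
      linarith [growth x hx, hmin (S y) hSX]
    by_contra hne
    have h2 : 0 < ‖x - S y‖ := norm_pos_iff.2 (sub_ne_zero.2 hne)
    have h3 : 0 < 1 / (2 * τ) * ‖x - S y‖ ^ 2 := by positivity
    linarith
end
end

section
/- Let A be a nonzero real m×n matrix, b ∈ ℝᵐ, u ∈ ℝⁿ, τ > 0, and let X = I₁ × ⋯ × Iₙ ⊆ ℝⁿ be a box with each Iᵢ ∈ T₁ ∪ T₂; assume X ∩ {x : Ax = b} ≠ ∅ and let x* be the unique minimizer of x ↦ ‖x‖₁ + (1/(2τ))‖x − u‖₂² over X ∩ {x : Ax = b}. Define s : ℝᵐ → ℝⁿ componentwise by s(y)ᵢ = [τ·shrink(τ⁻¹uᵢ + (Aᵀy)ᵢ)]_{Iᵢ}⁺, and assume there exists ŷ ∈ ℝᵐ with A·s(ŷ) = b. Let 0 < h < 2/(τ‖A‖²), where ‖A‖ is the ℓ²→ℓ² operator norm, and define sequences by y⁰ = 0, x^{k+1} = s(y^k), y^{k+1} = y^k + h(b − A x^{k+1}).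 Then there exists ȳ ∈ ℝᵐ with s(ȳ) = x* (equivalently A·s(ȳ) = b) such that the dual sequence converges: y^k → ȳ as k → ∞. -/
/-!
The method is gradient ascent on the concave dual function.
Each coordinate of `S` is the composition of the (monotone, 1-Lipschitz) shrinkage operator with
the (monotone, 1-Lipschitz) projection onto an interval, so `S` is cocoercive:
`‖S y - S z‖² ≤ τ ⟪y - z, A (S y - S z)⟫`. Hence, for every dual solution `z`,
`‖y⁺ - z‖² + h (2/τ - h ‖A‖²) ‖S y - S z‖² ≤ ‖y - z‖²`:
the iterates are Fejér monotone with respect to the dual solution set, and `S (y k) → S z`.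
A cluster point of the bounded sequence `y` is therefore a dual solution, and Fejér monotonicity
with respect to that cluster point forces convergence of the whole sequence
(`tendsto_of_cocoercive`).

That a dual solution `z` satisfies `S z = x*` follows because `S z` minimizes the strongly convex
Lagrangian `‖x‖₁ + (1/(2τ)) ‖x - u‖² - ⟪z, A x⟫` over the box; coordinatewise this is
`lagrangian_min_coord`.
-/

noncomputable section

open scoped RealInnerProductSpace

/-- The residual `a - shrink a` is a subgradient of the absolute value at `shrink a`. -/
lemma shrink_residual (a : ℝ) :
    |a - shrink a| ≤ 1 ∧ (0 < shrink a → a - shrink a = 1) ∧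
      (shrink a < 0 → a - shrink a = -1) := by
  unfold shrink
  rcases le_or_gt |a| 1 with h | h
  · rw [max_eq_right (by linarith)]
    simpa using h
  · rw [max_eq_left (by linarith)]
    rcases lt_abs.1 h with h' | h'
    · rw [Real.sign_of_pos (by linarith), abs_of_pos (a := a) (by linarith)]
      exact ⟨by norm_num, fun _ => by ring, fun _ => by linarith⟩
    · rw [Real.sign_of_neg (by linarith), abs_of_neg (a := a) (by linarith)]
      exact ⟨by norm_num, fun _ => by linarith, fun _ => by ring⟩

/-- `shrink` is monotone and nonexpansive, in a form suited to a strict comparison of values. -/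
lemma shrink_sub_le {a a' : ℝ} (h : shrink a' < shrink a) :
    shrink a - shrink a' ≤ a - a' := by
  obtain ⟨h1, h2, -⟩ := shrink_residual a
  obtain ⟨h1', -, h3'⟩ := shrink_residual a'
  rw [abs_le] at h1 h1'
  rcases lt_or_ge 0 (shrink a) with h0 | h0
  · linarith [h2 h0]
  · linarith [h3' (by linarith)]

lemma ordConnected_of_inT {I : Set ℝ} (hI : InT1 I ∨ InT2 I) : I.OrdConnected := by
  rcases hI with (⟨c, -, rfl⟩ | ⟨c, -, rfl⟩ | ⟨c, d, -, -, rfl⟩ | ⟨c, d, -, -, rfl⟩) |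
    ⟨c, d, -, -, rfl⟩
  · exact Set.ordConnected_Ici
  · exact Set.ordConnected_Iic
  all_goals exact Set.ordConnected_Icc

/-- If the projection lies strictly left of the projected point, it is the right end of `I`. -/
lemma IsProjR.le_of_lt {I : Set ℝ} (hI : I.OrdConnected) {w p t : ℝ} (hp : IsProjR I w p)
    (ht : t ∈ I) (h : p < w) : t ≤ p := by
  by_contra! hlt
  have hm : min t w ∈ I := hI.out hp.1 ht ⟨le_min hlt.le h.le, min_le_left _ _⟩
  have h1 := hp.2 _ hm
  rw [abs_of_neg (by linarith), abs_of_nonpos (by linarith [min_le_right t w])] at h1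
  linarith [lt_min hlt h]

/-- If the projection lies strictly right of the projected point, it is the left end of `I`. -/
lemma IsProjR.ge_of_gt {I : Set ℝ} (hI : I.OrdConnected) {w p t : ℝ} (hp : IsProjR I w p)
    (ht : t ∈ I) (h : w < p) : p ≤ t := by
  by_contra! hlt
  have hm : max t w ∈ I := hI.out ht hp.1 ⟨le_max_left _ _, max_le hlt.le h.le⟩
  have h1 := hp.2 _ hm
  rw [abs_of_pos (by linarith), abs_of_nonneg (by linarith [le_max_right t w])] at h1
  linarith [max_lt hlt h]

/-- Cocoercivity of one coordinate of `S`. -/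
lemma coord_cocoercive {I : Set ℝ} (hI : I.OrdConnected) {τ : ℝ} (hτ : 0 < τ) {a a' p p' : ℝ}
    (hp : IsProjR I (τ * shrink a) p) (hp' : IsProjR I (τ * shrink a') p') :
    (p - p') ^ 2 ≤ τ * ((a - a') * (p - p')) := by
  wlog hlt : p' < p generalizing a a' p p'
  · rcases (not_lt.1 hlt).eq_or_lt with rfl | h
    · simp
    · linarith [this hp' hp h]
  have h1 : p ≤ τ * shrink a := by
    by_contra! h
    linarith [hp.ge_of_gt hI hp'.1 h]
  have h2 : τ * shrink a' ≤ p' := by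
    by_contra! h
    linarith [hp'.le_of_lt hI hp.1 h]
  have h3 := shrink_sub_le (lt_of_mul_lt_mul_left (h2.trans_lt (hlt.trans_le h1)) hτ.le)
  have h4 : p - p' ≤ τ * (a - a') := by nlinarith
  nlinarith

/-- One coordinate of `S` minimizes the corresponding coordinate of the Lagrangian over the
interval `I`, with the quadratic growth that strong convexity provides. -/
lemma lagrangian_min_coord {I : Set ℝ} (hI : I.OrdConnected) {τ : ℝ} (hτ : 0 < τ) {u q p t : ℝ}
    (hp : IsProjR I (τ * shrink (τ⁻¹ * u + q)) p) (ht : t ∈ I) :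
    |p| + (1 / (2 * τ)) * (p - u) ^ 2 - q * p + (1 / (2 * τ)) * (t - p) ^ 2 ≤
      |t| + (1 / (2 * τ)) * (t - u) ^ 2 - q * t := by
  -- Expanding the squares reduces the claim to a subgradient inequality at `p`.
  suffices hs : (τ⁻¹ * u + q - τ⁻¹ * p) * (t - p) ≤ |t| - |p| by
    have : (1 / (2 * τ)) * (t - u) ^ 2 - (1 / (2 * τ)) * (p - u) ^ 2
        - (1 / (2 * τ)) * (t - p) ^ 2 = (τ⁻¹ * p - τ⁻¹ * u) * (t - p) := by
      field_simp
      ring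
    linarith
  obtain ⟨h1, h2, h3⟩ := shrink_residual (τ⁻¹ * u + q)
  set a := τ⁻¹ * u + q
  set g := shrink a
  have hi : 0 < τ⁻¹ := inv_pos.2 hτ
  have hg : τ⁻¹ * (τ * g) = g := by field_simp
  rw [abs_le] at h1
  rcases lt_trichotomy p (τ * g) with h | h | h
  · have htp := hp.le_of_lt hI ht h
    have hpg : τ⁻¹ * p < g := hg ▸ mul_lt_mul_of_pos_left h hi
    have hneg : -1 * (p - t) ≤ (a - τ⁻¹ * p) * (p - t) :=
      mul_le_mul_of_nonneg_right (by linarith) (by linarith)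
    rcases lt_or_ge p 0 with h0 | h0
    · rw [abs_of_neg h0, abs_of_neg (by linarith)]
      linarith
    · have hgp : 0 < g := lt_of_le_of_lt (by positivity) hpg
      have : 1 * (p - t) ≤ (a - τ⁻¹ * p) * (p - t) :=
        mul_le_mul_of_nonneg_right (by linarith [h2 hgp]) (by linarith)
      rw [abs_of_nonneg h0]
      linarith [le_abs_self t]
  · rw [h, hg, ← h]
    rcases lt_trichotomy g 0 with h0 | h0 | h0
    · have : p < 0 := by rw [h]; nlinarith
      rw [h3 h0, abs_of_neg this]
      linarith [neg_le_abs t]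
    · have : p = 0 := by rw [h, h0, mul_zero]
      rw [this, abs_zero, sub_zero, sub_zero]
      calc _ ≤ |(a - g) * t| := le_abs_self _
        _ = |a - g| * |t| := abs_mul _ _
        _ ≤ 1 * |t| := mul_le_mul_of_nonneg_right (abs_le.2 h1) (abs_nonneg _)
        _ = _ := one_mul _
    · have : 0 < p := by rw [h]; positivity
      rw [h2 h0, abs_of_pos this]
      linarith [le_abs_self t]
  · have htp := hp.ge_of_gt hI ht h
    have hpg : g < τ⁻¹ * p := hg ▸ mul_lt_mul_of_pos_left h hi
    have hpos : (a - τ⁻¹ * p) * (t - p) ≤ 1 * (t - p) :=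
      mul_le_mul_of_nonneg_right (by linarith) (by linarith)
    rcases lt_or_ge 0 p with h0 | h0
    · rw [abs_of_pos h0, abs_of_pos (by linarith)]
      linarith
    · have hgp : g < 0 := lt_of_lt_of_le hpg (by nlinarith)
      have : (a - τ⁻¹ * p) * (t - p) ≤ -1 * (t - p) :=
        mul_le_mul_of_nonneg_right (by linarith [h3 hgp]) (by linarith)
      rw [abs_of_nonpos h0]
      linarith [neg_le_abs t]

/-- Gradient iteration for the equation `L (S y) = b` with `S` cocoercive relative to `L`:
a Fejér monotonicity argument. -/
lemma tendsto_of_cocoercive {E F : Type*} [NormedAddCommGroup E] [InnerProductSpace ℝ E]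
    [NormedAddCommGroup F] [InnerProductSpace ℝ F] [ProperSpace F] (L : E →L[ℝ] F) (S : F → E)
    (b : F) {τ h : ℝ} (hτ : 0 < τ) (hh0 : 0 < h) (hh1 : h * (τ * ‖L‖ ^ 2) < 2)
    (hS : ∀ y z, ‖S y - S z‖ ^ 2 ≤ τ * ⟪y - z, L (S y - S z)⟫) (z : F) (hz : L (S z) = b)
    (y : ℕ → F) (hy : ∀ k, y (k + 1) = y k + h • (b - L (S (y k)))) :
    ∃ ybar, L (S ybar) = b ∧ Filter.Tendsto y Filter.atTop (nhds ybar) := by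
  have hc : 0 < h * (2 - h * (τ * ‖L‖ ^ 2)) := mul_pos hh0 (by linarith)
  have key : ∀ z, L (S z) = b → ∀ k,
      h * (2 - h * (τ * ‖L‖ ^ 2)) * ‖S (y k) - S z‖ ^ 2 ≤
        τ * (‖y k - z‖ ^ 2 - ‖y (k + 1) - z‖ ^ 2) := by
    intro z hz k
    have e : y (k + 1) - z = (y k - z) - h • L (S (y k) - S z) := by
      rw [hy, map_sub, hz, ← neg_sub b, smul_neg]
      abel
    have h1 : ‖L (S (y k) - S z)‖ ^ 2 ≤ ‖L‖ ^ 2 * ‖S (y k) - S z‖ ^ 2 := by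
      rw [← mul_pow]
      exact pow_le_pow_left₀ (norm_nonneg _) (L.le_opNorm _) 2
    rw [e, norm_sub_sq_real (y k - z), inner_smul_right, norm_smul, mul_pow, Real.norm_eq_abs, sq_abs]
    have h2 := mul_le_mul_of_nonneg_left (hS (y k) z) hh0.le
    have h3 := mul_le_mul_of_nonneg_left h1 (by positivity : 0 ≤ τ * h ^ 2)
    linarith
  have anti : ∀ z, L (S z) = b → Antitone fun k => ‖y k - z‖ ^ 2 := by
    refine fun z hz => antitone_nat_of_succ_le fun k => ?_
    have h1 : 0 ≤ τ * (‖y k - z‖ ^ 2 - ‖y (k + 1) - z‖ ^ 2) :=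
      le_trans (by positivity) (key z hz k)
    linarith [nonneg_of_mul_nonneg_right h1 hτ]
  have hlim : Filter.Tendsto (fun k => ‖S (y k) - S z‖) Filter.atTop (nhds 0) := by
    have hd := tendsto_atTop_ciInf (anti z hz) ⟨0, by rintro _ ⟨k, rfl⟩; positivity⟩
    have hd' := ((hd.sub (hd.comp (Filter.tendsto_add_atTop_nat 1))).const_mul τ).div_const
      (h * (2 - h * (τ * ‖L‖ ^ 2)))
    rw [sub_self, mul_zero, zero_div] at hd'
    have hsq : Filter.Tendsto (fun k => ‖S (y k) - S z‖ ^ 2) Filter.atTop (nhds 0) :=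
      squeeze_zero (fun k => by positivity)
        (fun k => (le_div_iff₀' hc).2 (key z hz k)) hd'
    simpa [Real.sqrt_sq] using hsq.sqrt
  have hcont : Continuous S := by
    refine (LipschitzWith.of_dist_le_mul (K := (τ * ‖L‖).toNNReal) fun v w => ?_).continuous
    rw [Real.coe_toNNReal _ (by positivity), dist_eq_norm, dist_eq_norm]
    rcases (norm_nonneg (S v - S w)).eq_or_lt with h0 | h0
    · rw [← h0]
      positivity
    · refine le_of_mul_le_mul_right ?_ h0
      calc ‖S v - S w‖ * ‖S v - S w‖ = ‖S v - S w‖ ^ 2 := (sq _).symm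
        _ ≤ τ * ⟪v - w, L (S v - S w)⟫ := hS v w
        _ ≤ τ * (‖v - w‖ * (‖L‖ * ‖S v - S w‖)) := by
          gcongr
          exact (real_inner_le_norm _ _).trans (by gcongr; exact L.le_opNorm _)
        _ = _ := by ring
  obtain ⟨ybar, -, φ, hφ, hsub⟩ := tendsto_subseq_of_bounded
    (Metric.isBounded_closedBall (x := z) (r := ‖y 0 - z‖)) (x := y) fun k => by
      rw [Metric.mem_closedBall, dist_eq_norm]
      exact le_of_sq_le_sq (anti z hz (Nat.zero_le k)) (norm_nonneg _)
  have hSbar : S ybar = S z :=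
    tendsto_nhds_unique ((hcont.tendsto ybar).comp hsub)
      ((tendsto_iff_norm_sub_tendsto_zero.2 hlim).comp hφ.tendsto_atTop)
  have hb : L (S ybar) = b := by rw [hSbar, hz]
  refine ⟨ybar, hb, tendsto_iff_norm_sub_tendsto_zero.2 ?_⟩
  have hanti : Antitone fun k => ‖y k - ybar‖ := fun i j hij =>
    le_of_sq_le_sq (anti ybar hb hij) (norm_nonneg _)
  exact (tendsto_iff_tendsto_subseq_of_antitone hanti hφ.tendsto_atTop).2
    (tendsto_iff_norm_sub_tendsto_zero.1 hsub)

lemma inner_toEuclideanLin {m n : ℕ} (A : Matrix (Fin m) (Fin n) ℝ)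
    (y : EuclideanSpace ℝ (Fin m)) (x : EuclideanSpace ℝ (Fin n)) :
    ⟪y, Matrix.toEuclideanLin A x⟫ = ∑ i, Matrix.toEuclideanLin A.transpose y i * x i := by
  have h := Matrix.dotProduct_mulVec (WithLp.ofLp y) A (WithLp.ofLp x)
  rw [← Matrix.mulVec_transpose] at h
  simpa [PiLp.inner_apply, dotProduct, Matrix.toLpLin_apply, mul_comm] using h

/-- convergence of the dual sequence of the ProShrink algorithm:
`y^k → ȳ` for some dual solution `ȳ` with `s(ȳ) = x*`. -/
theorem proshrink_dual_convergence {m n : ℕ} (A : Matrix (Fin m) (Fin n) ℝ)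
    (hA : A ≠ 0)
    (b : EuclideanSpace ℝ (Fin m)) (u : EuclideanSpace ℝ (Fin n))
    (τ : ℝ) (hτ : 0 < τ)
    (I : Fin n → Set ℝ) (hI : ∀ i, InT1 (I i) ∨ InT2 (I i))
    (X : Set (EuclideanSpace ℝ (Fin n))) (hX : X = {x | ∀ i, x i ∈ I i})
    (hfeas : ∃ x ∈ X, Matrix.toEuclideanLin A x = b)
    (xs : EuclideanSpace ℝ (Fin n)) (hxsX : xs ∈ X)
    (hxsb : Matrix.toEuclideanLin A xs = b)
    (hxsmin : ∀ x ∈ X, Matrix.toEuclideanLin A x = b →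
      (∑ i, |xs i|) + (1 / (2 * τ)) * ‖xs - u‖ ^ 2 ≤
        (∑ i, |x i|) + (1 / (2 * τ)) * ‖x - u‖ ^ 2)
    (S : EuclideanSpace ℝ (Fin m) → EuclideanSpace ℝ (Fin n))
    (hS : ∀ y i, IsProjR (I i)
      (τ * shrink (τ⁻¹ * u i + Matrix.toEuclideanLin A.transpose y i)) (S y i))
    (hdual : ∃ yhat : EuclideanSpace ℝ (Fin m), Matrix.toEuclideanLin A (S yhat) = b)
    (h : ℝ) (hh0 : 0 < h) (hh1 : h < 2 / (τ * opNorm A ^ 2))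
    (x : ℕ → EuclideanSpace ℝ (Fin n)) (y : ℕ → EuclideanSpace ℝ (Fin m))
    (hy0 : y 0 = 0)
    (hxk : ∀ k : ℕ, x (k + 1) = S (y k))
    (hyk : ∀ k : ℕ, y (k + 1) = y k + h • (b - Matrix.toEuclideanLin A (x (k + 1)))) :
    ∃ ybar : EuclideanSpace ℝ (Fin m),
      S ybar = xs ∧ Filter.Tendsto y Filter.atTop (nhds ybar) := by
  have hoc : ∀ i, (I i).OrdConnected := fun i => ordConnected_of_inT (hI i)
  subst hX
  have hcoc : ∀ y z, ‖S y - S z‖ ^ 2 ≤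
      τ * ⟪y - z, Matrix.toEuclideanLin A (S y - S z)⟫ := by
    intro y z
    rw [inner_toEuclideanLin, EuclideanSpace.real_norm_sq_eq, Finset.mul_sum]
    refine Finset.sum_le_sum fun i _ => ?_
    have := coord_cocoercive (hoc i) hτ (hS y i) (hS z i)
    simpa [add_sub_add_left_eq_sub] using this
  have hprimal : ∀ z, Matrix.toEuclideanLin A (S z) = b → S z = xs := by
    intro z hz
    have hsum := Finset.sum_le_sum fun i (_ : i ∈ Finset.univ) =>
      lagrangian_min_coord (hoc i) hτ (hS z i) (hxsX i)
    have h1 := hxsmin (S z) (fun i => (hS z i).1) hz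
    have h2 := (inner_toEuclideanLin A z (S z)).symm
    have h3 := (inner_toEuclideanLin A z xs).symm
    rw [hz] at h2
    rw [hxsb] at h3
    simp only [Finset.sum_add_distrib, Finset.sum_sub_distrib, ← Finset.mul_sum, h2, h3] at hsum
    simp only [EuclideanSpace.real_norm_sq_eq, PiLp.sub_apply] at h1
    have h4 : (1 / (2 * τ)) * ‖xs - S z‖ ^ 2 ≤ 0 := by
      simp only [EuclideanSpace.real_norm_sq_eq, PiLp.sub_apply]
      linarith
    have h5 : ‖xs - S z‖ ^ 2 ≤ 0 := nonpos_of_mul_nonpos_right h4 (by positivity)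
    have h6 : ‖xs - S z‖ = 0 := pow_eq_zero_iff two_ne_zero |>.1 (le_antisymm h5 (sq_nonneg _))
    exact (sub_eq_zero.1 (norm_eq_zero.1 h6)).symm
  have hstep : h * (τ * opNorm A ^ 2) < 2 := by
    rcases (by positivity : 0 ≤ τ * opNorm A ^ 2).eq_or_lt with h0 | h0
    · rw [← h0]
      norm_num
    · exact (lt_div_iff₀ h0).1 hh1
  obtain ⟨z, hz⟩ := hdual
  obtain ⟨ybar, hb, hlim⟩ := tendsto_of_cocoercive
    (LinearMap.toContinuousLinearMap (Matrix.toEuclideanLin A)) S b hτ hh0 hstep hcoc z hz y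
    fun k => by rw [hyk, hxk]; rfl
  exact ⟨ybar, hprimal ybar hb, hlim⟩
end
end
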